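/- arXiv:1309.1697 — 3 statements merged into one kernel-verified Lean document; each statement's English description precedes it below -/
import Mathlib

section
/- Let a < b be real numbers, h = b − a, c ∈ ℝ, and define v : [a,b] → ℝ by v(s) = c·((h − (s−a)/2)·(s−a) + 1). Then v(a) = c, and for every continuously differentiable δ : [a,b] → ℝ one has ∫_a^b v′(s)·δ′(s) ds + h·v(a)·δ(a) = c·∫_a^b δ(s) ds. -/
open MeasureTheory intervalIntegral

/-- The analytically computed optimal test function component
`v(s) = c·((h − (s−a)/2)·(s−a) + 1)` on an element `[a,b]` of length `h = b−a`
satisfies `v(a) = c` and solves the local variational problem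
`⟨v',δ'⟩_T + h·v(a)·δ(a) = c·⟨δ,1⟩_T` for all `δ ∈ C¹([a,b])`. -/
theorem optimal_test_function_phi
    (a b : ℝ) (hab : a < b) (h : ℝ) (hh : h = b - a) (c : ℝ)
    (v : ℝ → ℝ) (hv : v = fun s => c * ((h - (s - a) / 2) * (s - a) + 1)) :
    v a = c ∧
    ∀ (δ δ' : ℝ → ℝ),
      (∀ x ∈ Set.Icc a b, HasDerivWithinAt δ (δ' x) (Set.Icc a b) x) →
      ContinuousOn δ' (Set.Icc a b) →
      (∫ s in a..b, deriv v s * δ' s) + h * v a * δ a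
        = c * ∫ s in a..b, δ s := by
  have hva : v a = c := by rw [hv]; simp
  refine ⟨hva, ?_⟩
  intro δ δ' hd hc
  have hder : ∀ s, deriv v s = c * (b - s) := by
    intro s
    have h1 : HasDerivAt (fun s : ℝ => s - a) 1 s := (hasDerivAt_id s).sub_const a
    have h2 := ((((h1.div_const 2).const_sub h).mul h1).add_const 1).const_mul c
    have h3 : HasDerivAt v (c * (b - s)) s := by
      rw [hv]
      refine HasDerivAt.congr_deriv h2 ?_
      subst hh
      ring
    exact h3.deriv
  have hu : Set.uIcc a b = Set.Icc a b := Set.uIcc_of_le hab.le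
  have key := integral_mul_deriv_eq_deriv_mul_of_hasDerivWithinAt
    (a := a) (b := b) (u := fun s => c * (b - s)) (u' := fun _ => -c) (v := δ) (v' := δ')
    (fun x _ => by
      have := ((hasDerivAt_id x).const_sub b).const_mul c
      simpa using this.hasDerivWithinAt)
    (fun x hx => by rw [hu] at hx ⊢; exact hd x hx)
    (by simp)
    (ContinuousOn.intervalIntegrable (by rw [hu]; exact hc))
  simp only [hder]
  rw [key, hva, intervalIntegral.integral_const_mul, hh]
  ring
end

section
/- For every x ∈ [−1,1], the (Lebesgue) integral ∫_{−1}^{1} t·log|x−t| / √(1−t²) dt exists and equals −π·x. -/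
open MeasureTheory

theorem aux_deriv (a θ : ℝ) (hd : Real.sin ((θ - a) / 2) ≠ 0) (hs : Real.sin ((θ + a) / 2) ≠ 0) :
    HasDerivAt (fun θ : ℝ =>
      2 * Real.cos ((θ + a) / 2) * (Real.sin ((θ - a) / 2) * Real.log (Real.sin ((θ - a) / 2)))
      + 2 * Real.cos ((θ - a) / 2) * (Real.sin ((θ + a) / 2) * Real.log (Real.sin ((θ + a) / 2)))
      + (Real.log 2 - 1) * Real.sin θ - θ * Real.cos a)
      (Real.cos θ * Real.log (Real.cos a - Real.cos θ)) θ := by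
  have h1 : HasDerivAt (fun θ : ℝ => (θ + a) / 2) (1 / 2) θ := by
    simpa using ((hasDerivAt_id θ).add_const a).div_const 2
  have h2 : HasDerivAt (fun θ : ℝ => (θ - a) / 2) (1 / 2) θ := by
    simpa using ((hasDerivAt_id θ).sub_const a).div_const 2
  have m1 := (Real.hasDerivAt_mul_log hd).comp θ h2.sin
  have m2 := (Real.hasDerivAt_mul_log hs).comp θ h1.sin
  have H := ((((h1.cos.const_mul 2).mul m1).add ((h2.cos.const_mul 2).mul m2)).add
    ((Real.hasDerivAt_sin θ).const_mul (Real.log 2 - 1))).sub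
    ((hasDerivAt_id θ).mul_const (Real.cos a))
  refine H.congr_deriv ?_
  have e1 : Real.cos a - Real.cos θ = 2 * Real.sin ((θ + a) / 2) * Real.sin ((θ - a) / 2) := by
    rw [Real.cos_sub_cos, show (a - θ) / 2 = -((θ - a) / 2) by ring, Real.sin_neg,
      add_comm a θ]
    ring
  have e2 : Real.log (Real.cos a - Real.cos θ) = Real.log 2 + Real.log (Real.sin ((θ + a) / 2))
      + Real.log (Real.sin ((θ - a) / 2)) := by
    rw [e1, Real.log_mul (by positivity) hd, Real.log_mul (by norm_num) hs]
  have e3 : Real.cos θ = Real.cos ((θ + a) / 2) * Real.cos ((θ - a) / 2)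
      - Real.sin ((θ + a) / 2) * Real.sin ((θ - a) / 2) := by
    rw [← Real.cos_add]; congr 1; ring
  have e4 : Real.cos a = Real.cos ((θ + a) / 2) * Real.cos ((θ - a) / 2)
      + Real.sin ((θ + a) / 2) * Real.sin ((θ - a) / 2) := by
    rw [← Real.cos_sub]; congr 1; ring
  rw [e2, e4, e3]
  simp only [Function.comp]
  ring

theorem aux_int (a b c : ℝ) :
    IntervalIntegrable (fun θ => Real.cos θ * Real.log (Real.cos a - Real.cos θ)) volume b c := by
  have h : MeromorphicOn (fun θ : ℝ => Real.cos a - Real.cos θ) (Set.uIcc b c) := by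
    intro θ _
    have : AnalyticAt ℝ (fun θ : ℝ => Real.cos a - Real.cos θ) θ := by fun_prop
    exact this.meromorphicAt
  exact h.intervalIntegrable_log.continuousOn_mul Real.continuous_cos.continuousOn

theorem aux_eq (a : ℝ) (ha : a ∈ Set.Icc 0 Real.pi) :
    ∫ θ in (0:ℝ)..Real.pi, Real.cos θ * Real.log (Real.cos a - Real.cos θ)
      = - Real.pi * Real.cos a := by
  have hpi := Real.pi_pos
  rw [integral_eq_of_hasDerivAt_off_countable (fun θ : ℝ =>
      2 * Real.cos ((θ + a) / 2) * (Real.sin ((θ - a) / 2) * Real.log (Real.sin ((θ - a) / 2)))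
      + 2 * Real.cos ((θ - a) / 2) * (Real.sin ((θ + a) / 2) * Real.log (Real.sin ((θ + a) / 2)))
      + (Real.log 2 - 1) * Real.sin θ - θ * Real.cos a) _ (s := {a})
      (Set.countable_singleton a) ?_ ?_ (aux_int a _ _)]
  · have e1 : (Real.pi + a) / 2 = a / 2 + Real.pi / 2 := by ring
    have e2 : (Real.pi - a) / 2 = Real.pi / 2 - a / 2 := by ring
    have e3 : (0 - a) / 2 = -(a / 2) := by ring
    simp only [e1, e2, e3, Real.sin_add_pi_div_two, Real.cos_add_pi_div_two,
      Real.sin_pi_div_two_sub, Real.cos_pi_div_two_sub, Real.sin_neg, Real.cos_neg,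
      Real.log_neg_eq_log, zero_add, Real.sin_zero, Real.sin_pi]
    ring
  · have k1 : Continuous (fun θ : ℝ => Real.sin ((θ - a) / 2) * Real.log (Real.sin ((θ - a) / 2))) :=
      Real.continuous_mul_log.comp (f := fun θ : ℝ => Real.sin ((θ - a) / 2)) (by fun_prop)
    have k2 : Continuous (fun θ : ℝ => Real.sin ((θ + a) / 2) * Real.log (Real.sin ((θ + a) / 2))) :=
      Real.continuous_mul_log.comp (f := fun θ : ℝ => Real.sin ((θ + a) / 2)) (by fun_prop)
    apply Continuous.continuousOn
    fun_prop
  · rintro θ ⟨hθ, hne⟩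
    rw [min_eq_left hpi.le, max_eq_right hpi.le] at hθ
    obtain ⟨h0, h1⟩ := hθ
    obtain ⟨a0, a1⟩ := ha
    apply aux_deriv
    · intro h
      rw [Real.sin_eq_zero_iff_of_lt_of_lt (by linarith) (by linarith)] at h
      apply hne
      simp only [Set.mem_singleton_iff]
      linarith
    · exact (Real.sin_pos_of_pos_of_lt_pi (by linarith) (by linarith)).ne'

theorem singular_integral_identity :
    ∀ x ∈ Set.Icc (-1 : ℝ) 1,
      IntegrableOn (fun t => t * Real.log |x - t| / Real.sqrt (1 - t ^ 2))
        (Set.Ioo (-1 : ℝ) 1) ∧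
      (∫ t in Set.Ioo (-1 : ℝ) 1, t * Real.log |x - t| / Real.sqrt (1 - t ^ 2))
        = -Real.pi * x := by
  intro x hx
  obtain ⟨a, ha, rfl⟩ : ∃ a ∈ Set.Icc 0 Real.pi, Real.cos a = x :=
    ⟨Real.arccos x, ⟨Real.arccos_nonneg x, Real.arccos_le_pi x⟩, Real.cos_arccos hx.1 hx.2⟩
  have hpi := Real.pi_pos
  have him : Real.cos '' (Set.Ioo 0 Real.pi) = Set.Ioo (-1) 1 := by
    ext t
    constructor
    · rintro ⟨θ, ⟨h0, h1⟩, rfl⟩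
      constructor
      · rw [← Real.cos_pi]
        exact Real.cos_lt_cos_of_nonneg_of_le_pi h0.le le_rfl h1
      · rw [← Real.cos_zero]
        exact Real.cos_lt_cos_of_nonneg_of_le_pi le_rfl h1.le h0
    · rintro ⟨h0, h1⟩
      refine ⟨Real.arccos t, ⟨Real.arccos_pos.2 h1, ?_⟩, Real.cos_arccos h0.le h1.le⟩
      refine lt_of_le_of_ne (Real.arccos_le_pi t) fun h => ?_
      rw [Real.arccos_eq_pi] at h
      linarith
  have hinj : Set.InjOn Real.cos (Set.Ioo 0 Real.pi) :=
    Real.injOn_cos.mono Set.Ioo_subset_Icc_self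
  have hder : ∀ θ ∈ Set.Ioo 0 Real.pi,
      HasDerivWithinAt Real.cos (-Real.sin θ) (Set.Ioo 0 Real.pi) θ :=
    fun θ _ => (Real.hasDerivAt_cos θ).hasDerivWithinAt
  have hcongr : Set.EqOn (fun θ => |(-Real.sin θ)| • (Real.cos θ * Real.log |Real.cos a - Real.cos θ|
      / Real.sqrt (1 - Real.cos θ ^ 2)))
      (fun θ => Real.cos θ * Real.log (Real.cos a - Real.cos θ)) (Set.Ioo 0 Real.pi) := by
    intro θ hθ
    have hs := Real.sin_pos_of_pos_of_lt_pi hθ.1 hθ.2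
    simp only [smul_eq_mul, abs_neg, Real.log_abs]
    rw [← Real.sin_sq, Real.sqrt_sq hs.le, abs_of_pos hs]
    field_simp
  constructor
  · rw [← him, integrableOn_image_iff_integrableOn_abs_deriv_smul measurableSet_Ioo hder hinj,
      integrableOn_congr_fun hcongr measurableSet_Ioo,
      ← intervalIntegrable_iff_integrableOn_Ioo_of_le hpi.le]
    exact aux_int a _ _
  · rw [← him, integral_image_eq_integral_abs_deriv_smul measurableSet_Ioo hder hinj,
      setIntegral_congr_fun measurableSet_Ioo hcongr, ← integral_Ioc_eq_integral_Ioo,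
      ← intervalIntegral.integral_of_le hpi.le]
    exact aux_eq a ha
end

section
/- Let U be a real vector space, V a real Hilbert space, b : U × V → ℝ a bilinear form, and Θ : U → V a linear map satisfying ⟪Θu, w⟫_V = b(u,w) for all u ∈ U and w ∈ V. Let F : V → ℝ be linear, let W ⊆ U be a subspace, and suppose u ∈ U satisfies b(u,w) = F(w) for all w ∈ V, while u_h ∈ W satisfies b(u_h, Θz) = F(Θz) for all z ∈ W. Then for every z ∈ W one has ‖Θ(u − u_h)‖_V ≤ ‖Θ(u − z)‖_V; that is, u_h is a best approximation of u from W in the energy norm ‖u‖_E := ‖Θu‖_V. -/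
open RealInnerProductSpace

/-- Optimal convergence of the DPG method with optimal test functions: if `Θ`
is the trial-to-test operator, `⟪Θu, w⟫_V = b(u,w)`, `u` solves the continuous
problem and `u_h ∈ W` solves the discrete Petrov–Galerkin problem with test
space `Θ(W)`, then `u_h` is a best approximation of `u` from `W` in the energy
norm `‖u‖_E = ‖Θu‖_V`. -/
theorem dpg_best_approximation
    {U V : Type*} [AddCommGroup U] [Module ℝ U]
    [NormedAddCommGroup V] [InnerProductSpace ℝ V] [CompleteSpace V]
    (b : U →ₗ[ℝ] V →ₗ[ℝ] ℝ) (Θ : U →ₗ[ℝ] V)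
    (hΘ : ∀ (u : U) (w : V), ⟪Θ u, w⟫ = b u w)
    (F : V →ₗ[ℝ] ℝ) (W : Submodule ℝ U)
    (u : U) (hu : ∀ w : V, b u w = F w)
    (uh : U) (huhW : uh ∈ W)
    (huh : ∀ z ∈ W, b uh (Θ z) = F (Θ z)) :
    ∀ z ∈ W, ‖Θ (u - uh)‖ ≤ ‖Θ (u - z)‖ := by
  intro z hz
  have horth : ⟪Θ (u - uh), Θ (uh - z)⟫ = 0 := by
    rw [hΘ, map_sub, LinearMap.sub_apply, hu, huh _ (W.sub_mem huhW hz), sub_self]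
  have hsum : Θ (u - z) = Θ (u - uh) + Θ (uh - z) := by
    rw [← map_add, sub_add_sub_cancel]
  have hpyth := norm_add_sq_eq_norm_sq_add_norm_sq_of_inner_eq_zero _ _ horth
  rw [← hsum] at hpyth
  nlinarith [norm_nonneg (Θ (u - uh)), norm_nonneg (Θ (u - z)), norm_nonneg (Θ (uh - z))]
end
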